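/- Let h₀ and h₁ be complex Hilbert spaces, E₁₁ a bounded self-adjoint operator on h₁, E₁₀ : h₀ → h₁ bounded, E₀₁ = E₁₀†, E₀₀ a bounded self-adjoint operator on h₀, σ a real number, and κ₊ = 1/2 + iσ, κ₋ = 1/2 − iσ. Set R = (1 + iκ₊E₁₁)^{-1}, S(σ) = (1 − iκ₋E₁₁)·R, L(σ) = −i·R·E₁₀, and H(σ) = E₀₀ + (X − X†)/(2i) where X = κ₊·E₀₁·R·E₁₀. Then: (i) for all u, v ∈ h₁ and Φ ∈ h₀, the equation i·(u − v) + E₁₁·(κ₋·u + κ₊·v) + E₁₀·Φ = 0 holds if and only if v = S(σ)·u + L(σ)·Φ; and (ii) whenever v = S(σ)·u + L(σ)·Φ, one has −i·(E₀₀·Φ + E₀₁·(κ₋·u + κ₊·v)) = (−(1/2)·L(σ)†L(σ) − i·H(σ))·Φ − L(σ)†·S(σ)·u. (This is the gauge-modified form of the Chebotarev–Gregoratti Hamiltonian theorem, with u, v playing the roles of a₊Φ, a₋Φ and 𝔞 = κ₋a₊ + κ₊a₋.) -/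

import Mathlib

open ContinuousLinearMap

/-!
Write `κ = κ₊`, `κ̄ = κ₋`, so that `κ̄ + κ = 1`, and let `R = (1 + iκE₁₁)⁻¹`, which exists since a
self-adjoint operator has real spectrum. The `𝔞†` coefficient is affine in `v` with linear part
`-i(1 + iκE₁₁)`, so solving for `v` gives the boundary condition. On it, `κ̄ + κS = R` yields
`𝔞Φ = Ru + κLΦ`. Self-adjointness of `E₁₁` makes `1 - iκ̄E₁₁` the adjoint of `1 + iκE₁₁`, so
`R†S = R`, which settles the `u`-terms; multiplying `κ̄ + κS = R` by `R†` then gives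
`R†R = κR + κ̄R†`, that is `L†L = X + X†`, which settles the `Φ`-terms.
-/

open Complex (I)
open scoped ComplexConjugate

theorem isUnit_one_add_smul_of_isSelfAdjoint {A : Type*} [CStarAlgebra A] {a : A}
    (ha : IsSelfAdjoint a) {z : ℂ} (hz : z.im ≠ 0) : IsUnit (1 + z • a) := by
  have hz₀ : z ≠ 0 := by
    rintro rfl
    exact hz Complex.zero_im
  have hmem : -z⁻¹ ∉ spectrum ℂ a := fun h ↦ by
    have := ha.im_eq_zero_of_mem_spectrum h
    simp_all [Complex.inv_im]
  have hunit := (spectrum.notMem_iff.mp hmem).smul (Units.mk0 (-z) (neg_ne_zero.mpr hz₀))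
  rw [Units.smul_mk0, smul_sub, Algebra.algebraMap_eq_smul_one, smul_smul, neg_mul_neg,
    mul_inv_cancel₀ hz₀, one_smul, neg_smul, sub_neg_eq_add] at hunit
  exact hunit

section Algebra

variable {A : Type*} [Ring A] [Algebra ℂ A] {κ : ℂ} {a : A}

/-- The operator `R = (1 + iκ₊a)⁻¹` with `κ = κ₊`, from which the gauge-modified
Hudson–Parthasarathy parameters are built. It is `0` if `1 + iκ₊a` is not invertible. -/
noncomputable def gaugeResolvent (κ : ℂ) (a : A) : A :=
  Ring.inverse (1 + (I * κ) • a)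

/-- The Hudson–Parthasarathy parameter `S = (1 - iκ₋a)(1 + iκ₊a)⁻¹`, with `κ = κ₊` and
`κ₋` encoded as `conj κ`. -/
noncomputable def gaugeScattering (κ : ℂ) (a : A) : A :=
  (1 - (I * conj κ) • a) * gaugeResolvent κ a

theorem one_add_smul_mul_gaugeScattering (ha : IsUnit (1 + (I * κ) • a)) :
    (1 + (I * κ) • a) * gaugeScattering κ a = 1 - (I * conj κ) • a := by
  have hcomm : Commute (1 + (I * κ) • a) (1 - (I * conj κ) • a) :=
    have h (z w : ℂ) : Commute (z • a) (w • a) := ((Commute.refl a).smul_left z).smul_right w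
    (Commute.one_left _).add_left ((Commute.one_right _).sub_right (h _ _))
  rw [gaugeScattering, gaugeResolvent, ← mul_assoc, hcomm.eq,
    Ring.mul_inverse_cancel_right _ _ ha]

theorem conj_smul_one_add_smul_gaugeScattering (hκ : κ.re = 1 / 2)
    (ha : IsUnit (1 + (I * κ) • a)) :
    conj κ • 1 + κ • gaugeScattering κ a = gaugeResolvent κ a := by
  have hsum : conj κ + κ = 1 := by simp [add_comm, Complex.add_conj, hκ]
  calc conj κ • 1 + κ • gaugeScattering κ a
      = (conj κ • (1 + (I * κ) • a) + κ • (1 - (I * conj κ) • a)) * gaugeResolvent κ a := by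
        rw [add_mul, smul_mul_assoc, smul_mul_assoc, gaugeScattering, gaugeResolvent,
          Ring.mul_inverse_cancel _ ha]
    _ = ((conj κ + κ) • 1) * gaugeResolvent κ a := by congr 1; module
    _ = gaugeResolvent κ a := by rw [hsum, one_smul, one_mul]

variable [StarRing A] [StarModule ℂ A]

theorem star_gaugeResolvent_mul_gaugeScattering (hsa : IsSelfAdjoint a)
    (ha : IsUnit (1 + (I * κ) • a)) :
    star (gaugeResolvent κ a) * gaugeScattering κ a = gaugeResolvent κ a := by
  have hstar : 1 - (I * conj κ) • a = star (1 + (I * κ) • a) := by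
    simp [hsa.star_eq, sub_eq_add_neg]
  rw [gaugeScattering, hstar, ← mul_assoc, ← star_mul, gaugeResolvent,
    Ring.mul_inverse_cancel _ ha, star_one, one_mul]

theorem star_gaugeResolvent_mul_self (hκ : κ.re = 1 / 2) (hsa : IsSelfAdjoint a)
    (ha : IsUnit (1 + (I * κ) • a)) :
    star (gaugeResolvent κ a) * gaugeResolvent κ a =
      κ • gaugeResolvent κ a + conj κ • star (gaugeResolvent κ a) := by
  nth_rw 2 [← conj_smul_one_add_smul_gaugeScattering hκ ha]
  rw [mul_add, mul_smul_comm, mul_smul_comm, mul_one,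
    star_gaugeResolvent_mul_gaugeScattering hsa ha, add_comm]

end Algebra

section BoundaryCondition

variable {V W : Type*} [AddCommGroup V] [Module ℂ V] [TopologicalSpace V]
  [IsTopologicalAddGroup V] [ContinuousConstSMul ℂ V]
  [AddCommGroup W] [Module ℂ W] [TopologicalSpace W]

/-- The Hudson–Parthasarathy parameter `L = -i(1 + iκ₊E)⁻¹F`, with `κ = κ₊`, `E = E₁₁` and
`F = E₁₀`. -/
noncomputable def gaugeCoupling (κ : ℂ) (E : V →L[ℂ] V) (F : W →L[ℂ] V) : W →L[ℂ] V :=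
  (-I) • (gaugeResolvent κ E ∘L F)

theorem gauge_boundary_condition_iff {κ : ℂ} {E : V →L[ℂ] V} (hE : IsUnit (1 + (I * κ) • E))
    (F : W →L[ℂ] V) (u v : V) (Φ : W) :
    I • (u - v) + E (conj κ • u + κ • v) + F Φ = 0 ↔
      v = gaugeScattering κ E u + gaugeCoupling κ E F Φ := by
  set T : V →L[ℂ] V := 1 + (I * κ) • E
  have hinj : Function.Injective T :=
    Function.LeftInverse.injective (g := ⇑(gaugeResolvent κ E)) fun x ↦
      DFunLike.congr_fun (Ring.inverse_mul_cancel T hE) x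
  have hS : T (gaugeScattering κ E u) = u - (I * conj κ) • E u :=
    DFunLike.congr_fun (one_add_smul_mul_gaugeScattering hE) u
  have hL : T (gaugeCoupling κ E F Φ) = (-I) • F Φ := by
    have hTR : T (gaugeResolvent κ E (F Φ)) = F Φ :=
      DFunLike.congr_fun (Ring.mul_inverse_cancel T hE) (F Φ)
    rw [gaugeCoupling, smul_apply, comp_apply, map_smul, hTR]
  have hcoeff : I • (u - v) + E (conj κ • u + κ • v) + F Φ =
      I • (T (gaugeScattering κ E u + gaugeCoupling κ E F Φ) - T v) := by
    have hv : T v = v + (I * κ) • E v := rfl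
    rw [map_add T, hS, hL, hv, map_add, map_smul, map_smul]
    simp only [smul_add, smul_sub, smul_smul, ← mul_assoc, mul_neg, Complex.I_mul_I]
    module
  rw [hcoeff, smul_eq_zero_iff_right Complex.I_ne_zero, sub_eq_zero, hinj.eq_iff, eq_comm]

theorem conj_smul_add_smul_gaugeScattering_apply_add {κ : ℂ} (hκ : κ.re = 1 / 2)
    {E : V →L[ℂ] V} (hE : IsUnit (1 + (I * κ) • E)) (u w : V) :
    conj κ • u + κ • (gaugeScattering κ E u + w) = gaugeResolvent κ E u + κ • w := by
  rw [← conj_smul_one_add_smul_gaugeScattering hκ hE, smul_add, ← add_assoc]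
  rfl

end BoundaryCondition

section Hilbert

variable {h₀ h₁ : Type*}
  [NormedAddCommGroup h₀] [InnerProductSpace ℂ h₀] [CompleteSpace h₀]
  [NormedAddCommGroup h₁] [InnerProductSpace ℂ h₁] [CompleteSpace h₁]
  {κ : ℂ} {E₁₁ : h₁ →L[ℂ] h₁}

/-- The operator `X = E₀₁ κ₊ (1 + iκ₊E₁₁)⁻¹ E₁₀`, with `κ = κ₊` and `E₀₁` encoded as
`adjoint E₁₀`; its imaginary part is the correction to `E₀₀` in the Hamiltonian `H`. -/
noncomputable def gaugeEnergyShift (κ : ℂ) (E₁₁ : h₁ →L[ℂ] h₁) (E₁₀ : h₀ →L[ℂ] h₁) :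
    h₀ →L[ℂ] h₀ :=
  κ • (adjoint E₁₀ ∘L (gaugeResolvent κ E₁₁ ∘L E₁₀))

/-- The Hudson–Parthasarathy parameter `H = E₀₀ + Im X`, where `Im X = (X - X†)/(2i)`. -/
noncomputable def gaugeHamiltonian (κ : ℂ) (E₁₁ : h₁ →L[ℂ] h₁) (E₁₀ : h₀ →L[ℂ] h₁)
    (E₀₀ : h₀ →L[ℂ] h₀) : h₀ →L[ℂ] h₀ :=
  E₀₀ + (2 * I)⁻¹ • (gaugeEnergyShift κ E₁₁ E₁₀ - adjoint (gaugeEnergyShift κ E₁₁ E₁₀))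

theorem gaugeEnergyShift_eq_smul_adjoint_comp_gaugeCoupling (κ : ℂ) (E₁₁ : h₁ →L[ℂ] h₁)
    (E₁₀ : h₀ →L[ℂ] h₁) :
    gaugeEnergyShift κ E₁₁ E₁₀ = (I * κ) • (adjoint E₁₀ ∘L gaugeCoupling κ E₁₁ E₁₀) := by
  have hI : I * κ * -I = κ := by linear_combination (-κ) * Complex.I_mul_I
  rw [gaugeEnergyShift, gaugeCoupling, comp_smul, smul_smul, hI]

theorem adjoint_gaugeCoupling (κ : ℂ) (E₁₁ : h₁ →L[ℂ] h₁) (E₁₀ : h₀ →L[ℂ] h₁) :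
    adjoint (gaugeCoupling κ E₁₁ E₁₀) = I • (adjoint E₁₀ ∘L star (gaugeResolvent κ E₁₁)) := by
  simp [gaugeCoupling, map_smulₛₗ, adjoint_comp, star_eq_adjoint]

theorem adjoint_gaugeCoupling_comp_gaugeScattering (hsa : IsSelfAdjoint E₁₁)
    (hE₁₁ : IsUnit (1 + (I * κ) • E₁₁)) (E₁₀ : h₀ →L[ℂ] h₁) :
    adjoint (gaugeCoupling κ E₁₁ E₁₀) ∘L gaugeScattering κ E₁₁ =
      I • (adjoint E₁₀ ∘L gaugeResolvent κ E₁₁) := by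
  rw [adjoint_gaugeCoupling, smul_comp, comp_assoc, ← mul_def,
    star_gaugeResolvent_mul_gaugeScattering hsa hE₁₁]

theorem adjoint_gaugeCoupling_comp_self (hκ : κ.re = 1 / 2) (hsa : IsSelfAdjoint E₁₁)
    (hE₁₁ : IsUnit (1 + (I * κ) • E₁₁)) (E₁₀ : h₀ →L[ℂ] h₁) :
    adjoint (gaugeCoupling κ E₁₁ E₁₀) ∘L gaugeCoupling κ E₁₁ E₁₀ =
      gaugeEnergyShift κ E₁₁ E₁₀ + adjoint (gaugeEnergyShift κ E₁₁ E₁₀) := by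
  set R := gaugeResolvent κ E₁₁ with hR
  calc adjoint (gaugeCoupling κ E₁₁ E₁₀) ∘L gaugeCoupling κ E₁₁ E₁₀
      = adjoint E₁₀ ∘L ((star R * R) ∘L E₁₀) := by
        rw [adjoint_gaugeCoupling, gaugeCoupling, smul_comp, comp_smul, smul_smul, mul_neg,
          Complex.I_mul_I, neg_neg, one_smul, mul_def]
        rfl
    _ = adjoint E₁₀ ∘L ((κ • R + conj κ • star R) ∘L E₁₀) := by
        rw [hR, star_gaugeResolvent_mul_self hκ hsa hE₁₁]
    _ = gaugeEnergyShift κ E₁₁ E₁₀ + adjoint (gaugeEnergyShift κ E₁₁ E₁₀) := by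
        simp [gaugeEnergyShift, map_smulₛₗ, adjoint_comp, star_eq_adjoint, hR, add_comp,
          smul_comp, comp_assoc]

theorem gauge_drift_eq (hκ : κ.re = 1 / 2) (hsa : IsSelfAdjoint E₁₁)
    (hE₁₁ : IsUnit (1 + (I * κ) • E₁₁)) (E₁₀ : h₀ →L[ℂ] h₁) (E₀₀ : h₀ →L[ℂ] h₀) :
    (-(1 : ℂ) / 2) • (adjoint (gaugeCoupling κ E₁₁ E₁₀) ∘L gaugeCoupling κ E₁₁ E₁₀) -
        I • gaugeHamiltonian κ E₁₁ E₁₀ E₀₀ =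
      (-I) • E₀₀ - gaugeEnergyShift κ E₁₁ E₁₀ := by
  have hhalf : I * (2 * I)⁻¹ = 1 / 2 := by field_simp
  rw [adjoint_gaugeCoupling_comp_self hκ hsa hE₁₁, gaugeHamiltonian, smul_add I, smul_smul I,
    hhalf]
  module

theorem gauge_modified_hamiltonian_general (hκ : κ.re = 1 / 2) (hE₁₁ : IsSelfAdjoint E₁₁)
    (E₁₀ : h₀ →L[ℂ] h₁) (E₀₀ : h₀ →L[ℂ] h₀) :
    (∀ (u v : h₁) (Φ : h₀),
      I • (u - v) + E₁₁ (conj κ • u + κ • v) + E₁₀ Φ = 0 ↔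
        v = gaugeScattering κ E₁₁ u + gaugeCoupling κ E₁₁ E₁₀ Φ) ∧
    (∀ (u : h₁) (Φ : h₀) (v : h₁),
      v = gaugeScattering κ E₁₁ u + gaugeCoupling κ E₁₁ E₁₀ Φ →
      (-I) • (E₀₀ Φ + adjoint E₁₀ (conj κ • u + κ • v)) =
        (-(1 : ℂ) / 2) • adjoint (gaugeCoupling κ E₁₁ E₁₀) (gaugeCoupling κ E₁₁ E₁₀ Φ) -
          I • gaugeHamiltonian κ E₁₁ E₁₀ E₀₀ Φ -
          adjoint (gaugeCoupling κ E₁₁ E₁₀) (gaugeScattering κ E₁₁ u)) := by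
  have hunit : IsUnit (1 + (I * κ) • E₁₁) :=
    isUnit_one_add_smul_of_isSelfAdjoint hE₁₁ (by simp [hκ])
  refine ⟨gauge_boundary_condition_iff hunit E₁₀, ?_⟩
  rintro u Φ _ rfl
  have hdrift := DFunLike.congr_fun (gauge_drift_eq hκ hE₁₁ hunit E₁₀ E₀₀) Φ
  have hLS := DFunLike.congr_fun (adjoint_gaugeCoupling_comp_gaugeScattering hE₁₁ hunit E₁₀) u
  have hX := DFunLike.congr_fun (gaugeEnergyShift_eq_smul_adjoint_comp_gaugeCoupling κ E₁₁ E₁₀) Φ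
  simp only [sub_apply, smul_apply, comp_apply] at hdrift hLS hX
  rw [conj_smul_add_smul_gaugeScattering_apply_add hκ hunit, hdrift, hLS, hX, map_add, map_smul]
  module

end Hilbert

/-- The gauge-modified form of the Chebotarev–Gregoratti Hamiltonian theorem, with
`κ± = 1/2 ± iσ` and `𝔞 = κ₋a₊ + κ₊a₋` (here `u, v` play the roles of `a₊Φ, a₋Φ`):
(i) the vanishing of the `𝔞†` coefficient, `i(u − v) + E₁₁(κ₋u + κ₊v) + E₁₀Φ = 0`,
is equivalent to the boundary condition `v = S(σ)u + L(σ)Φ`; and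
(ii) on that boundary condition the remaining action satisfies
`−i(E₀₀Φ + E₀₁(κ₋u + κ₊v)) = (−½L(σ)†L(σ) − iH(σ))Φ − L(σ)†S(σ)u`. -/
theorem gauge_modified_hamiltonian {h₀ h₁ : Type*}
    [NormedAddCommGroup h₀] [InnerProductSpace ℂ h₀] [CompleteSpace h₀]
    [NormedAddCommGroup h₁] [InnerProductSpace ℂ h₁] [CompleteSpace h₁]
    (E₁₁ : h₁ →L[ℂ] h₁) (hE₁₁ : IsSelfAdjoint E₁₁)
    (E₁₀ : h₀ →L[ℂ] h₁) (E₀₁ : h₁ →L[ℂ] h₀) (hE₀₁ : E₀₁ = adjoint E₁₀)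
    (E₀₀ : h₀ →L[ℂ] h₀) (hE₀₀ : IsSelfAdjoint E₀₀)
    (σ : ℝ) (κp κm : ℂ) (hκp : κp = 1/2 + Complex.I * σ) (hκm : κm = 1/2 - Complex.I * σ)
    (R : h₁ →L[ℂ] h₁) (hR : R = Ring.inverse (1 + (Complex.I * κp) • E₁₁))
    (S : h₁ →L[ℂ] h₁) (hS : S = (1 - (Complex.I * κm) • E₁₁) * R)
    (L : h₀ →L[ℂ] h₁) (hL : L = (-Complex.I) • (R ∘L E₁₀))
    (X : h₀ →L[ℂ] h₀) (hX : X = κp • (E₀₁ ∘L (R ∘L E₁₀)))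
    (H : h₀ →L[ℂ] h₀) (hH : H = E₀₀ + (2 * Complex.I)⁻¹ • (X - adjoint X)) :
    (∀ (u v : h₁) (Φ : h₀),
      Complex.I • (u - v) + E₁₁ (κm • u + κp • v) + E₁₀ Φ = 0 ↔
        v = S u + L Φ) ∧
    (∀ (u : h₁) (Φ : h₀) (v : h₁), v = S u + L Φ →
      (-Complex.I) • (E₀₀ Φ + E₀₁ (κm • u + κp • v))
        = (-(1:ℂ)/2) • (adjoint L) (L Φ) - Complex.I • H Φ - (adjoint L) (S u)) := by
  obtain rfl : κm = conj κp := by simp [hκp, hκm, sub_eq_add_neg, Complex.conj_ofNat]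
  subst hR hS hL hX hH hE₀₁
  exact gauge_modified_hamiltonian_general (by simp [hκp]) hE₁₁ E₁₀ E₀₀
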